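/- Let S = Q[x_0,x_1,x_2,x_3] and let I = (x_0 x_2, x_1 x_2, x_0 x_3, x_1 x_3, x_0^2 x_1 − x_0 x_1^2, x_2^2 x_3 − x_2 x_3^2) be the ideal of the six points in P^3(Q) lying on the two disjoint lines V(x_0,x_1) and V(x_2,x_3). Then there exists a linear form L ∈ S_1 that is a nonzerodivisor on S/I such that the Artinian reduction A = S/(I + (L)) has Hilbert function dim A_0 = 1, dim A_1 = 3, dim A_2 = 2, A_i = 0 for i ≥ 3, and A has the Weak Lefschetz Property: there exists a linear form l ∈ A_1 such that the multiplication map ·l : A_i → A_{i+1} has full rank for every i ≥ 0. -/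

import Mathlib

/-!
*Nonzerodivisor.* The two lines are the coordinate subspaces `x₂ = x₃ = 0` and `x₀ = x₁ = 0`, whose
linear spans meet only in the origin. Hence a polynomial lies in the ideal `I` of the six points iff
its restriction to each line is divisible by the cubic of the three points on it, `x₀x₁(x₀ - x₁)` or
`x₂x₃(x₂ - x₃)`. The form `L = x₀ + x₁ + x₂ + x₃` restricts to the irreducible forms `x₀ + x₁` and
`x₂ + x₃`, which do not divide these cubics, so `L` can be cancelled modulo `I`.

*Hilbert function.* In `A = S/(I + (L))` multiplying the relation `L = 0` by the variables expresses
every square through `x₀x₁` and `x₂x₃`, and multiplying it by these two products kills all cubics.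
So `x₀, x₁, x₂` span `A₁`, `x₀x₁, x₂x₃` span `A₂`, and `A₃ = 0`. Independence is seen by evaluating
forms at points `w` with `L(w) = 0`: evaluation is well defined on `A₁`, and on `A₂` if moreover `w`
lies on one of the lines, because the other generators of `I` then have too large a degree.

*Weak Lefschetz.* For `l = x₀ + x₂` one has `l ≠ 0` in `A₁`, so `A₀ → A₁` is injective, and
`l x₁ = x₀x₁`, `l x₃ = x₂x₃`, so `A₁ → A₂` is surjective.
-/

open MvPolynomial

/-- The degree-`d` graded piece of the quotient `S ⧸ I`. -/
noncomputable def quotPiece {K : Type} [Field K] {σ : Type}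
    (I : Ideal (MvPolynomial σ K)) (d : ℕ) : Submodule K (MvPolynomial σ K ⧸ I) :=
  (MvPolynomial.homogeneousSubmodule σ K d).map (Ideal.Quotient.mkₐ K I).toLinearMap

/-- The ideal of the six points on two disjoint lines in `ℙ³`;
here `X 0, X 1, X 2, X 3` stand for `x_0, x_1, x_2, x_3`. -/
noncomputable def sixPointsIdeal : Ideal (MvPolynomial (Fin 4) ℚ) :=
  Ideal.span
    {X 0 * X 2, X 1 * X 2, X 0 * X 3, X 1 * X 3,
     X 0 ^ 2 * X 1 - X 0 * X 1 ^ 2, X 2 ^ 2 * X 3 - X 2 * X 3 ^ 2}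

/-! ### Restriction to coordinate subspaces -/

section CoordinateSubspaces

variable {σ R : Type*} [CommRing R]

/-- Restriction of polynomials to the coordinate subspace on which the variables outside `s` vanish,
as an endomorphism of the polynomial ring: those variables are replaced by `0`. -/
noncomputable def coordRestrict (s : Set σ) : MvPolynomial σ R →ₐ[R] MvPolynomial σ R :=
  aeval (s.indicator X)

lemma coordRestrict_X_of_mem {s : Set σ} {i : σ} (hi : i ∈ s) :
    coordRestrict s (X i : MvPolynomial σ R) = X i := by
  rw [coordRestrict, aeval_X, Set.indicator_of_mem hi]

lemma coordRestrict_X_of_notMem {s : Set σ} {i : σ} (hi : i ∉ s) :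
    coordRestrict s (X i : MvPolynomial σ R) = 0 := by
  rw [coordRestrict, aeval_X, Set.indicator_of_notMem hi]

lemma sub_coordRestrict_mem_span (s : Set σ) (g : MvPolynomial σ R) :
    g - coordRestrict s g ∈ Ideal.span (X '' sᶜ) := by
  let π := Ideal.Quotient.mkₐ R (Ideal.span (X '' sᶜ : Set (MvPolynomial σ R)))
  have hπ : π = π.comp (coordRestrict s) := by
    refine algHom_ext fun i => Ideal.Quotient.eq.2 ?_
    by_cases hi : i ∈ s
    · simp [coordRestrict_X_of_mem hi]
    · simpa [coordRestrict_X_of_notMem hi] using Ideal.subset_span (Set.mem_image_of_mem X hi)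
  exact Ideal.Quotient.eq.1 (DFunLike.congr_fun hπ g)

lemma sub_coordRestrict_compl_mem_mul {s : Set σ} {g : MvPolynomial σ R}
    (hg : g ∈ Ideal.span (X '' sᶜ)) :
    g - coordRestrict sᶜ g ∈ Ideal.span (X '' s) * Ideal.span (X '' sᶜ) := by
  induction hg using Submodule.span_induction with
  | mem f hf =>
    obtain ⟨i, hi, rfl⟩ := hf
    simp [coordRestrict_X_of_mem hi]
  | zero => simp
  | add f g _ _ hf hg =>
    rw [map_add, add_sub_add_comm]
    exact add_mem hf hg
  | smul a f hf ih =>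
    have ha : a - coordRestrict sᶜ a ∈ Ideal.span (X '' s) := by
      simpa only [compl_compl] using sub_coordRestrict_mem_span sᶜ a
    have hsplit : a • f - coordRestrict sᶜ (a • f) =
        (a - coordRestrict sᶜ a) * f + coordRestrict sᶜ a * (f - coordRestrict sᶜ f) := by
      rw [smul_eq_mul, map_mul]
      ring
    rw [hsplit]
    exact add_mem (Ideal.mul_mem_mul ha hf) (Ideal.mul_mem_left _ _ ih)

end CoordinateSubspaces

section LineCubic

variable {σ R : Type*} [CommRing R]

/-- The cubic `xᵢxⱼ(xᵢ - xⱼ)`, cutting out the points `(1 : 0)`, `(0 : 1)`, `(1 : 1)` on the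
projective line with coordinates `xᵢ, xⱼ`. -/
noncomputable def lineCubic (i j : σ) : MvPolynomial σ R := X i ^ 2 * X j - X i * X j ^ 2

lemma irreducible_X_add_X [IsDomain R] {i j : σ} (hij : i ≠ j) :
    Irreducible (X i + X j : MvPolynomial σ R) := by
  simpa using irreducible_mul_X_add 1 (X j) i one_ne_zero (by simp) (by simpa using hij)
    (isRelPrime_one_left (x := (X j : MvPolynomial σ R)))

lemma lineCubic_dvd_of_dvd_add_mul [IsDomain R] [UniqueFactorizationMonoid R]
    (h2 : (2 : R) ≠ 0) {i j : σ} (hij : i ≠ j) {p : MvPolynomial σ R}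
    (h : lineCubic i j ∣ (X i + X j) * p) : lineCubic i j ∣ p := by
  classical
  refine IsRelPrime.dvd_of_dvd_mul_left ?_ h
  refine ((irreducible_X_add_X hij).isRelPrime_iff_not_dvd.2 fun hdvd => h2 ?_).symm
  have heval := map_dvd (eval (Pi.single i (-1) + Pi.single j 1 : σ → R)) hdvd
  simpa [lineCubic, hij, hij.symm, one_add_one_eq_two] using heval

end LineCubic

/-! ### Forms modulo a homogeneous ideal -/

section EvaluationFunctionals

variable {σ R : Type*} [CommRing R]

/-- Restriction of polynomials to the line `t ↦ (wᵢ t)ᵢ` through the origin. -/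
noncomputable def restrictLine (w : σ → R) : MvPolynomial σ R →ₐ[R] Polynomial R :=
  aeval fun i => Polynomial.C (w i) * Polynomial.X

lemma restrictLine_of_isHomogeneous {f : MvPolynomial σ R} {d : ℕ} (hf : f.IsHomogeneous d)
    (w : σ → R) : restrictLine w f = Polynomial.C (eval w f) * Polynomial.X ^ d := by
  rw [restrictLine, aeval_def, eval₂_eq, eval_eq, map_sum, Finset.sum_mul]
  refine Finset.sum_congr rfl fun m hm => ?_
  simp only [mul_pow, Finset.prod_mul_distrib, Finset.prod_pow_eq_pow_sum,
    map_mul, map_prod, map_pow, mul_assoc]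
  rw [hf.degree_eq_sum_deg_support hm]
  rfl

lemma eval_eq_zero_of_mem_span {S : Set (MvPolynomial σ R)} {w : σ → R} {d : ℕ}
    (hS : ∀ f ∈ S, ∃ e, f.IsHomogeneous e ∧ (eval w f = 0 ∨ d < e))
    {g : MvPolynomial σ R} (hg : g ∈ Ideal.span S) (hd : g.IsHomogeneous d) : eval w g = 0 := by
  have span_le : Ideal.span S ≤ (Ideal.span {Polynomial.X ^ (d + 1)}).comap (restrictLine w) := by
    refine Ideal.span_le.2 fun f hf => Ideal.mem_span_singleton.2 ?_
    obtain ⟨e, he, h0 | hlt⟩ := hS f hf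
    · simp [restrictLine_of_isHomogeneous he, h0]
    · rw [restrictLine_of_isHomogeneous he]
      exact (pow_dvd_pow _ hlt).mul_left _
  have hdvd := Polynomial.X_pow_dvd_iff.1 (Ideal.mem_span_singleton.1 (span_le hg)) d d.lt_succ_self
  simpa [restrictLine_of_isHomogeneous hd] using hdvd

lemma linearIndependent_mk_of_eval [NoZeroDivisors R] {ι : Type*} {I : Ideal (MvPolynomial σ R)}
    {d : ℕ} {f : ι → MvPolynomial σ R} {w : ι → σ → R} (hf : ∀ i, (f i).IsHomogeneous d)
    (hI : ∀ i, ∀ g ∈ I, g.IsHomogeneous d → eval (w i) g = 0)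
    (hdiag : ∀ i, eval (w i) (f i) ≠ 0) (hoff : ∀ i j, j ≠ i → eval (w i) (f j) = 0) :
    LinearIndependent R fun i => Ideal.Quotient.mk I (f i) := by
  rw [linearIndependent_iff']
  intro s c hc i hi
  have hmem : ∑ j ∈ s, c j • f j ∈ I := by
    rw [← Ideal.Quotient.eq_zero_iff_mem, map_sum]
    exact hc
  have hhom : (∑ j ∈ s, c j • f j).IsHomogeneous d :=
    (homogeneousSubmodule σ R d).sum_mem fun j _ => Submodule.smul_mem _ _ (hf j)
  have heval := hI i _ hmem hhom
  rw [map_sum, Finset.sum_eq_single_of_mem i hi fun j _ hj => by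
    rw [smul_eval, hoff i j hj, mul_zero], smul_eval] at heval
  exact (mul_eq_zero.1 heval).resolve_right (hdiag i)

end EvaluationFunctionals

section GradedPieces

variable {K σ : Type} [Field K]

lemma quotPiece_zero (I : Ideal (MvPolynomial σ K)) : quotPiece I 0 = Submodule.span K {1} := by
  rw [quotPiece, homogeneousSubmodule_zero, Submodule.one_eq_span, Submodule.map_span,
    Set.image_singleton, AlgHom.toLinearMap_apply, map_one]

lemma mk_mem_quotPiece (I : Ideal (MvPolynomial σ K)) {f : MvPolynomial σ K} {d : ℕ}
    (hf : f.IsHomogeneous d) : Ideal.Quotient.mk I f ∈ quotPiece I d :=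
  Submodule.mem_map_of_mem hf

lemma quotPiece_succ_le {I : Ideal (MvPolynomial σ K)} {d : ℕ} {s : Set (MvPolynomial σ K ⧸ I)}
    {N : Submodule K (MvPolynomial σ K ⧸ I)} (hs : quotPiece I d ≤ Submodule.span K s)
    (hN : ∀ a ∈ s, ∀ i, a * Ideal.Quotient.mk I (X i) ∈ N) : quotPiece I (d + 1) ≤ N := by
  have hone : quotPiece I 1 = Submodule.span K (Set.range fun i => Ideal.Quotient.mk I (X i)) := by
    rw [quotPiece, homogeneousSubmodule_one_eq_span_X, Submodule.map_span, ← Set.range_comp]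
    rfl
  have hmul : quotPiece I (d + 1) = quotPiece I d * quotPiece I 1 := by
    rw [quotPiece, ← homogeneousSubmodule_one_pow, pow_succ, homogeneousSubmodule_one_pow]
    exact Submodule.map_mul _ _ (Ideal.Quotient.mkₐ K I)
  calc quotPiece I (d + 1) = quotPiece I d * quotPiece I 1 := hmul
    _ ≤ Submodule.span K s * Submodule.span K (Set.range fun i => Ideal.Quotient.mk I (X i)) :=
      mul_le_mul' hs hone.le
    _ ≤ N := by
      rw [Submodule.span_mul_span, Submodule.span_le]
      rintro _ ⟨a, ha, _, ⟨i, rfl⟩, rfl⟩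
      exact hN a ha i

lemma finrank_quotPiece_eq_card {ι : Type*} [Fintype ι] {I : Ideal (MvPolynomial σ K)} {d : ℕ}
    {f : ι → MvPolynomial σ K} (hf : ∀ i, (f i).IsHomogeneous d)
    (hspan : quotPiece I d ≤ Submodule.span K (Ideal.Quotient.mk I '' Set.range f))
    (hli : LinearIndependent K fun i => Ideal.Quotient.mk I (f i)) :
    Module.finrank K (quotPiece I d) = Fintype.card ι := by
  rw [← Set.range_comp] at hspan
  have hle : Submodule.span K (Set.range (Ideal.Quotient.mk I ∘ f)) ≤ quotPiece I d := by
    rw [Submodule.span_le]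
    rintro _ ⟨i, rfl⟩
    exact mk_mem_quotPiece I (hf i)
  rw [hspan.antisymm hle]
  exact finrank_span_eq_card hli

lemma eq_zero_of_mk_mul_eq_zero {I : Ideal (MvPolynomial σ K)} {l : MvPolynomial σ K}
    (hl : l ∉ I) {x : MvPolynomial σ K ⧸ I} (hx : x ∈ quotPiece I 0)
    (h : Ideal.Quotient.mk I l * x = 0) : x = 0 := by
  rw [quotPiece_zero] at hx
  obtain ⟨c, rfl⟩ := Submodule.mem_span_singleton.1 hx
  rw [mul_smul_comm, mul_one, smul_eq_zero, Ideal.Quotient.eq_zero_iff_mem] at h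
  rw [h.resolve_right hl, zero_smul]

end GradedPieces

/-! ### The ideal of the six points -/

section SixPoints

lemma span_mul_span_le_sixPointsIdeal :
    Ideal.span (X '' {0, 1}) * Ideal.span (X '' {2, 3}) ≤ sixPointsIdeal := by
  rw [Ideal.span_mul_span', Ideal.span_le]
  rintro _ ⟨_, ⟨i, hi, rfl⟩, _, ⟨j, hj, rfl⟩, rfl⟩
  refine Ideal.subset_span ?_
  obtain rfl | rfl := hi <;> obtain rfl | rfl := hj <;> simp

lemma mem_sixPointsIdeal_iff {g : MvPolynomial (Fin 4) ℚ} :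
    g ∈ sixPointsIdeal ↔
      lineCubic 0 1 ∣ coordRestrict {0, 1} g ∧ lineCubic 2 3 ∣ coordRestrict {2, 3} g := by
  constructor
  · intro hg
    have hle : sixPointsIdeal ≤ (Ideal.span {lineCubic 0 1}).comap (coordRestrict {0, 1}) ⊓
        (Ideal.span {lineCubic 2 3}).comap (coordRestrict {2, 3}) := by
      refine Ideal.span_le.2 ?_
      rintro f (rfl | rfl | rfl | rfl | rfl | rfl) <;> simp [lineCubic, coordRestrict]
    exact (hle hg).imp Ideal.mem_span_singleton.1 Ideal.mem_span_singleton.1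
  · rintro ⟨h01, h23⟩
    have hcompl : ({0, 1} : Set (Fin 4))ᶜ = {2, 3} := by
      ext i
      fin_cases i <;> simp
    have hzero : coordRestrict {2, 3} (coordRestrict {0, 1} g) = 0 := by
      obtain ⟨a, ha⟩ := h01
      rw [ha, map_mul]
      simp [lineCubic, coordRestrict]
    have hmixed := sub_coordRestrict_compl_mem_mul (sub_coordRestrict_mem_span {0, 1} g)
    rw [hcompl, map_sub, hzero, sub_zero] at hmixed
    have hg01 : coordRestrict {0, 1} g ∈ sixPointsIdeal :=
      Ideal.mem_of_dvd _ h01 (Ideal.subset_span (by simp [lineCubic]))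
    have hg23 : coordRestrict {2, 3} g ∈ sixPointsIdeal :=
      Ideal.mem_of_dvd _ h23 (Ideal.subset_span (by simp [lineCubic]))
    simpa using add_mem (add_mem (span_mul_span_le_sixPointsIdeal hmixed) hg23) hg01

/-- The linear form by which the ideal of the six points is reduced; it vanishes at none of them. -/
noncomputable def sumForm : MvPolynomial (Fin 4) ℚ := X 0 + X 1 + X 2 + X 3

lemma mem_sixPointsIdeal_of_sumForm_mul_mem {g : MvPolynomial (Fin 4) ℚ}
    (hg : sumForm * g ∈ sixPointsIdeal) : g ∈ sixPointsIdeal := by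
  have hL01 : coordRestrict {0, 1} sumForm = X 0 + X 1 := by simp [sumForm, coordRestrict]
  have hL23 : coordRestrict {2, 3} sumForm = X 2 + X 3 := by simp [sumForm, coordRestrict]
  rw [mem_sixPointsIdeal_iff, map_mul, map_mul, hL01, hL23] at hg
  exact mem_sixPointsIdeal_iff.2
    ⟨lineCubic_dvd_of_dvd_add_mul two_ne_zero (by decide) hg.1,
      lineCubic_dvd_of_dvd_add_mul two_ne_zero (by decide) hg.2⟩

/-! ### The Artinian reduction -/

/-- The ideal `I + (L)` defining the Artinian reduction `A`. -/
noncomputable def artinianIdeal : Ideal (MvPolynomial (Fin 4) ℚ) :=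
  sixPointsIdeal + Ideal.span {sumForm}

lemma eval_eq_zero_of_mem_artinianIdeal {g : MvPolynomial (Fin 4) ℚ} (hg : g ∈ artinianIdeal)
    {d : ℕ} (hd : g.IsHomogeneous d) {w : Fin 4 → ℚ} (hsum : w 0 + w 1 + w 2 + w 3 = 0)
    (hlines : d < 2 ∨ (w 2 = 0 ∧ w 3 = 0) ∨ (w 0 = 0 ∧ w 1 = 0)) (hcubic : d < 3) :
    eval w g = 0 := by
  rw [artinianIdeal, sixPointsIdeal, Submodule.add_eq_sup, ← Ideal.span_union] at hg
  refine eval_eq_zero_of_mem_span ?_ hg hd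
  have quadric (i j : Fin 4) : (X i * X j : MvPolynomial (Fin 4) ℚ).IsHomogeneous 2 :=
    (isHomogeneous_X ℚ i).mul (isHomogeneous_X ℚ j)
  have cubic (i j : Fin 4) :
      (X i ^ 2 * X j - X i * X j ^ 2 : MvPolynomial (Fin 4) ℚ).IsHomogeneous 3 :=
    ((isHomogeneous_X_pow i 2).mul (isHomogeneous_X ℚ j)).sub
      ((isHomogeneous_X ℚ i).mul (isHomogeneous_X_pow j 2))
  rintro f ((rfl | rfl | rfl | rfl | rfl | rfl) | rfl)
  iterate 4
    refine ⟨2, quadric _ _, ?_⟩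
    obtain h | ⟨h, h'⟩ | ⟨h, h'⟩ := hlines <;> simp [*]
  iterate 2
    exact ⟨3, cubic _ _, .inr hcubic⟩
  exact ⟨1, (((isHomogeneous_X ℚ 0).add (isHomogeneous_X ℚ 1)).add (isHomogeneous_X ℚ 2)).add
    (isHomogeneous_X ℚ 3), .inl (by simpa [sumForm] using hsum)⟩

/-- The class of the variable `xᵢ` in the Artinian reduction. -/
noncomputable abbrev xbar (i : Fin 4) : MvPolynomial (Fin 4) ℚ ⧸ artinianIdeal :=
  Ideal.Quotient.mk artinianIdeal (X i)

lemma mk_artinianIdeal_eq_zero {f : MvPolynomial (Fin 4) ℚ} (hf : f ∈ sixPointsIdeal) :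
    Ideal.Quotient.mk artinianIdeal f = 0 :=
  Ideal.Quotient.eq_zero_iff_mem.2 (Ideal.mem_sup_left hf)

lemma xbar_mul_xbar_eq_zero {i j : Fin 4} (hi : i ∈ ({0, 1} : Set (Fin 4)))
    (hj : j ∈ ({2, 3} : Set (Fin 4))) : xbar i * xbar j = 0 := by
  rw [xbar, xbar, ← map_mul]
  exact mk_artinianIdeal_eq_zero (span_mul_span_le_sixPointsIdeal (Ideal.mul_mem_mul
    (Ideal.subset_span (Set.mem_image_of_mem X hi))
    (Ideal.subset_span (Set.mem_image_of_mem X hj))))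

lemma sum_xbar_eq_zero : xbar 0 + xbar 1 + xbar 2 + xbar 3 = 0 := by
  simp only [xbar, ← map_add]
  exact Ideal.Quotient.eq_zero_iff_mem.2 (Ideal.mem_sup_right (Ideal.mem_span_singleton_self _))

lemma xbar_sq_mul_eq_zero {i j : Fin 4} (h : lineCubic i j ∈ sixPointsIdeal)
    (hsum : xbar i * xbar j * (xbar i + xbar j) = 0) :
    xbar i ^ 2 * xbar j = 0 ∧ xbar i * xbar j ^ 2 = 0 := by
  have hdiff : xbar i ^ 2 * xbar j - xbar i * xbar j ^ 2 = 0 := by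
    simpa only [lineCubic, map_sub, map_mul, map_pow] using mk_artinianIdeal_eq_zero h
  constructor
  · linear_combination (norm := algebra) (1 / 2 : ℚ) • (hsum + hdiff)
  · linear_combination (norm := algebra) (1 / 2 : ℚ) • (hsum - hdiff)

lemma quotPiece_one_le :
    quotPiece artinianIdeal 1 ≤ Submodule.span ℚ {xbar 0, xbar 1, xbar 2} := by
  refine quotPiece_succ_le (quotPiece_zero _).le ?_
  rintro _ rfl i
  rw [one_mul]
  match i with
  | 0 | 1 | 2 => exact Submodule.subset_span (by simp)
  | 3 =>
    refine Submodule.mem_span_triple.2 ⟨-1, -1, -1, ?_⟩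
    linear_combination (norm := algebra) (-1 : ℚ) • sum_xbar_eq_zero

lemma xbar_mul_self :
    xbar 0 * xbar 0 = -(xbar 0 * xbar 1) ∧ xbar 1 * xbar 1 = -(xbar 0 * xbar 1) ∧
      xbar 2 * xbar 2 = -(xbar 2 * xbar 3) := by
  have h02 : xbar 0 * xbar 2 = 0 := xbar_mul_xbar_eq_zero (by simp) (by simp)
  have h03 : xbar 0 * xbar 3 = 0 := xbar_mul_xbar_eq_zero (by simp) (by simp)
  have h12 : xbar 1 * xbar 2 = 0 := xbar_mul_xbar_eq_zero (by simp) (by simp)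
  have h13 : xbar 1 * xbar 3 = 0 := xbar_mul_xbar_eq_zero (by simp) (by simp)
  refine ⟨?_, ?_, ?_⟩
  · linear_combination xbar 0 * sum_xbar_eq_zero - h02 - h03
  · linear_combination xbar 1 * sum_xbar_eq_zero - h12 - h13
  · linear_combination xbar 2 * sum_xbar_eq_zero - h02 - h12

lemma quotPiece_two_le :
    quotPiece artinianIdeal 2 ≤ Submodule.span ℚ {xbar 0 * xbar 1, xbar 2 * xbar 3} := by
  refine quotPiece_succ_le quotPiece_one_le ?_
  have h01 : xbar 0 * xbar 1 ∈ Submodule.span ℚ {xbar 0 * xbar 1, xbar 2 * xbar 3} :=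
    Submodule.subset_span (by simp)
  have h23 : xbar 2 * xbar 3 ∈ Submodule.span ℚ {xbar 0 * xbar 1, xbar 2 * xbar 3} :=
    Submodule.subset_span (by simp)
  have hzero {i j : Fin 4} (hi : i ∈ ({0, 1} : Set (Fin 4))) (hj : j ∈ ({2, 3} : Set (Fin 4))) :
      xbar i * xbar j ∈ Submodule.span ℚ {xbar 0 * xbar 1, xbar 2 * xbar 3} :=
    xbar_mul_xbar_eq_zero hi hj ▸ zero_mem _
  obtain ⟨h00, h11, h22⟩ := xbar_mul_self
  rintro _ (rfl | rfl | rfl) j <;> fin_cases j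
  · exact h00 ▸ neg_mem h01
  · exact h01
  · exact hzero (by simp) (by simp)
  · exact hzero (by simp) (by simp)
  · exact mul_comm (xbar 0) (xbar 1) ▸ h01
  · exact h11 ▸ neg_mem h01
  · exact hzero (by simp) (by simp)
  · exact hzero (by simp) (by simp)
  · exact mul_comm (xbar 0) (xbar 2) ▸ hzero (by simp) (by simp)
  · exact mul_comm (xbar 1) (xbar 2) ▸ hzero (by simp) (by simp)
  · exact h22 ▸ neg_mem h23
  · exact h23

lemma quotPiece_three : quotPiece artinianIdeal 3 = ⊥ := by
  have h02 : xbar 0 * xbar 2 = 0 := xbar_mul_xbar_eq_zero (by simp) (by simp)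
  have h03 : xbar 0 * xbar 3 = 0 := xbar_mul_xbar_eq_zero (by simp) (by simp)
  have h12 : xbar 1 * xbar 2 = 0 := xbar_mul_xbar_eq_zero (by simp) (by simp)
  obtain ⟨h001, h011⟩ : xbar 0 ^ 2 * xbar 1 = 0 ∧ xbar 0 * xbar 1 ^ 2 = 0 :=
    xbar_sq_mul_eq_zero (Ideal.subset_span (by simp [lineCubic])) (by
      linear_combination xbar 0 * xbar 1 * sum_xbar_eq_zero - xbar 1 * h02 - xbar 1 * h03)
  obtain ⟨h223, h233⟩ : xbar 2 ^ 2 * xbar 3 = 0 ∧ xbar 2 * xbar 3 ^ 2 = 0 :=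
    xbar_sq_mul_eq_zero (Ideal.subset_span (by simp [lineCubic])) (by
      linear_combination xbar 2 * xbar 3 * sum_xbar_eq_zero - xbar 3 * h02 - xbar 3 * h12)
  refine eq_bot_iff.2 (quotPiece_succ_le quotPiece_two_le ?_)
  rintro _ (rfl | rfl) i <;> rw [Submodule.mem_bot]
  · match i with
    | 0 => linear_combination h001
    | 1 => linear_combination h011
    | 2 => linear_combination xbar 1 * h02
    | 3 => linear_combination xbar 1 * h03
  · match i with
    | 0 => linear_combination xbar 3 * h02
    | 1 => linear_combination xbar 3 * h12
    | 2 => linear_combination h223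
    | 3 => linear_combination h233

lemma quotPiece_eq_bot {i : ℕ} (hi : 3 ≤ i) : quotPiece artinianIdeal i = ⊥ := by
  induction i, hi using Nat.le_induction with
  | base => exact quotPiece_three
  | succ i _ ih =>
    refine eq_bot_iff.2 (quotPiece_succ_le (s := ∅) ?_ (by simp))
    rw [ih, Submodule.span_empty]

lemma finrank_quotPiece_zero : Module.finrank ℚ (quotPiece artinianIdeal 0) = 1 := by
  have hf : ∀ i, (![1] i : MvPolynomial (Fin 4) ℚ).IsHomogeneous 0 := by
    simpa using isHomogeneous_one (Fin 4) ℚ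
  refine finrank_quotPiece_eq_card hf ?_ (linearIndependent_mk_of_eval (w := ![0]) hf ?_ ?_ ?_)
  · simp [quotPiece_zero]
  · exact fun i g hg hd =>
      eval_eq_zero_of_mem_artinianIdeal hg hd (by simp) (by simp) (by simp)
  · simp
  · simp

lemma finrank_quotPiece_one : Module.finrank ℚ (quotPiece artinianIdeal 1) = 3 := by
  have hf : ∀ i, (![X 0, X 1, X 2] i : MvPolynomial (Fin 4) ℚ).IsHomogeneous 1 := by
    simp [Fin.forall_fin_succ, isHomogeneous_X]
  refine finrank_quotPiece_eq_card hf ?_ (linearIndependent_mk_of_eval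
    (w := ![![1, 0, 0, -1], ![0, 1, 0, -1], ![0, 0, 1, -1]]) hf ?_ ?_ ?_)
  · exact quotPiece_one_le.trans (Submodule.span_mono (by simp [Set.insert_subset_iff]))
  · intro i g hg hd
    refine eval_eq_zero_of_mem_artinianIdeal hg hd ?_ (by simp) (by simp)
    fin_cases i <;> simp
  · simp [Fin.forall_fin_succ]
  · simp [Fin.forall_fin_succ]

lemma finrank_quotPiece_two : Module.finrank ℚ (quotPiece artinianIdeal 2) = 2 := by
  have hf : ∀ i, (![X 0 * X 1, X 2 * X 3] i : MvPolynomial (Fin 4) ℚ).IsHomogeneous 2 := by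
    simp [Fin.forall_fin_succ, (isHomogeneous_X ℚ _).mul (isHomogeneous_X ℚ _)]
  refine finrank_quotPiece_eq_card hf ?_ (linearIndependent_mk_of_eval
    (w := ![![1, -1, 0, 0], ![0, 0, 1, -1]]) hf ?_ ?_ ?_)
  · exact quotPiece_two_le.trans (Submodule.span_mono (by simp [Set.insert_subset_iff]))
  · intro i g hg hd
    refine eval_eq_zero_of_mem_artinianIdeal hg hd ?_ ?_ (by simp) <;> fin_cases i <;> simp
  · simp [Fin.forall_fin_succ]
  · simp [Fin.forall_fin_succ]

lemma X_zero_add_X_two_notMem_artinianIdeal : X 0 + X 2 ∉ artinianIdeal := fun hmem => by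
  simpa using eval_eq_zero_of_mem_artinianIdeal hmem
    ((isHomogeneous_X ℚ 0).add (isHomogeneous_X ℚ 2)) (w := ![1, -1, 0, 0]) (by simp) (by simp)
    (by simp)

lemma exists_mk_X_zero_add_X_two_mul_eq {y : MvPolynomial (Fin 4) ℚ ⧸ artinianIdeal}
    (hy : y ∈ quotPiece artinianIdeal 2) :
    ∃ x ∈ quotPiece artinianIdeal 1, Ideal.Quotient.mk artinianIdeal (X 0 + X 2) * x = y := by
  suffices quotPiece artinianIdeal 2 ≤ (quotPiece artinianIdeal 1).map
      (LinearMap.mulLeft ℚ (Ideal.Quotient.mk artinianIdeal (X 0 + X 2))) from this hy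
  refine quotPiece_two_le.trans (Submodule.span_le.2 ?_)
  rintro _ (rfl | rfl)
  · refine ⟨xbar 1, mk_mem_quotPiece _ (isHomogeneous_X ℚ 1), ?_⟩
    have h12 : xbar 1 * xbar 2 = 0 := xbar_mul_xbar_eq_zero (by simp) (by simp)
    rw [LinearMap.mulLeft_apply, map_add]
    linear_combination h12
  · refine ⟨xbar 3, mk_mem_quotPiece _ (isHomogeneous_X ℚ 3), ?_⟩
    have h03 : xbar 0 * xbar 3 = 0 := xbar_mul_xbar_eq_zero (by simp) (by simp)
    rw [LinearMap.mulLeft_apply, map_add]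
    linear_combination h03

end SixPoints

/-- the Artinian reduction of the six points on two disjoint lines
has Hilbert function (1,3,2) and has the WLP. -/
theorem six_points_on_two_lines_WLP :
    ∃ L ∈ homogeneousSubmodule (Fin 4) ℚ 1,
      (∀ g : MvPolynomial (Fin 4) ℚ, L * g ∈ sixPointsIdeal → g ∈ sixPointsIdeal) ∧
      Module.finrank ℚ (quotPiece (sixPointsIdeal + Ideal.span {L}) 0) = 1 ∧
      Module.finrank ℚ (quotPiece (sixPointsIdeal + Ideal.span {L}) 1) = 3 ∧
      Module.finrank ℚ (quotPiece (sixPointsIdeal + Ideal.span {L}) 2) = 2 ∧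
      (∀ i ≥ 3, quotPiece (sixPointsIdeal + Ideal.span {L}) i = ⊥) ∧
      ∃ l ∈ homogeneousSubmodule (Fin 4) ℚ 1, ∀ i : ℕ,
        (∀ x ∈ quotPiece (sixPointsIdeal + Ideal.span {L}) i,
            Ideal.Quotient.mk (sixPointsIdeal + Ideal.span {L}) l * x = 0 → x = 0) ∨
        (∀ y ∈ quotPiece (sixPointsIdeal + Ideal.span {L}) (i + 1),
            ∃ x ∈ quotPiece (sixPointsIdeal + Ideal.span {L}) i,
              Ideal.Quotient.mk (sixPointsIdeal + Ideal.span {L}) l * x = y) := by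
  have hX (i : Fin 4) : (X i : MvPolynomial (Fin 4) ℚ).IsHomogeneous 1 := isHomogeneous_X ℚ i
  refine ⟨sumForm, (((hX 0).add (hX 1)).add (hX 2)).add (hX 3),
    fun _ => mem_sixPointsIdeal_of_sumForm_mul_mem, finrank_quotPiece_zero, finrank_quotPiece_one,
    finrank_quotPiece_two, fun _ => quotPiece_eq_bot, X 0 + X 2, (hX 0).add (hX 2), ?_⟩
  rintro (_ | _ | i)
  · exact .inl fun x => eq_zero_of_mk_mul_eq_zero X_zero_add_X_two_notMem_artinianIdeal
  · exact .inr fun y => exists_mk_X_zero_add_X_two_mul_eq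
  · refine .inr fun y hy => ⟨0, zero_mem _, ?_⟩
    have hy0 : y = 0 :=
      (Submodule.mem_bot ℚ).1 ((quotPiece_eq_bot (Nat.le_add_left 3 i)).le hy)
    rw [hy0, mul_zero]
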